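/- Let n ≥ 1, α > 0, 0 < a₀ < 1, and let f_* : Γₙ⁺ → (0,∞) be homogeneous of degree one with f_*(1,…,1) = 1. Set t̃ = t + (1+α)⁻¹. Then the function v(ξ,t) = −a₀[(1+α)t̃]^{1/(1+α)}·√(1−|ξ|²) is a strict supersolution of the dual flow: ∂ₜv > −F_*(A*[v(·,t)])^{−α}·w* at every (ξ,t) ∈ B₁×(0,∞). -/

import Mathlib

open Real Filter Set

noncomputable section

/-- Partial derivative of `u` in the `i`-th coordinate direction. -/
def pd (n : ℕ) (u : (Fin n → ℝ) → ℝ) (i : Fin n) (x : Fin n → ℝ) : ℝ :=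
  fderiv ℝ u x (Pi.single i 1)

/-- Hessian matrix of `u`. -/
def hess (n : ℕ) (u : (Fin n → ℝ) → ℝ) (x : Fin n → ℝ) : Matrix (Fin n) (Fin n) ℝ :=
  Matrix.of fun i j => pd n (pd n u j) i x

/-- Squared Euclidean norm of the gradient. -/
def gradSq (n : ℕ) (u : (Fin n → ℝ) → ℝ) (x : Fin n → ℝ) : ℝ :=
  ∑ i, (pd n u i x) ^ 2

/-- `w = √(1 - |Du|²)`. -/
def wF (n : ℕ) (u : (Fin n → ℝ) → ℝ) (x : Fin n → ℝ) : ℝ :=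
  Real.sqrt (1 - gradSq n u x)

/-- `γ^{ik} = δ_{ik} + u_i u_k / (w (1 + w))`. -/
def gammaM (n : ℕ) (u : (Fin n → ℝ) → ℝ) (x : Fin n → ℝ) : Matrix (Fin n) (Fin n) ℝ :=
  Matrix.of fun i k =>
    (if i = k then (1 : ℝ) else 0) + pd n u i x * pd n u k x / (wF n u x * (1 + wF n u x))

/-- The principal-curvature matrix `A[u] = (1/w) γ (D²u) γ`. -/
def curvM (n : ℕ) (u : (Fin n → ℝ) → ℝ) (x : Fin n → ℝ) : Matrix (Fin n) (Fin n) ℝ :=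
  (wF n u x)⁻¹ • (gammaM n u x * hess n u x * gammaM n u x)

/-- The positive cone `Γₙ⁺`. -/
def GammaPlus (n : ℕ) : Set (Fin n → ℝ) := {κ | ∀ i, 0 < κ i}

/-- `F(A) = 1 / f_*(κ₁⁻¹, …, κₙ⁻¹)` where `κᵢ` are the eigenvalues of `A`. -/
def Fc (n : ℕ) (fstar : (Fin n → ℝ) → ℝ) (A : Matrix (Fin n) (Fin n) ℝ) : ℝ :=
  if h : A.IsHermitian then 1 / fstar (fun i => (h.eigenvalues i)⁻¹) else 0

/-- `F_*(A) = f_*(eigenvalues of A)`. -/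
def FsM (n : ℕ) (fstar : (Fin n → ℝ) → ℝ) (A : Matrix (Fin n) (Fin n) ℝ) : ℝ :=
  if h : A.IsHermitian then fstar h.eigenvalues else 0

/-- `w* = √(1 - |ξ|²)`. -/
def wS (n : ℕ) (ξ : Fin n → ℝ) : ℝ := Real.sqrt (1 - ∑ i, (ξ i) ^ 2)

/-- `γ*_{ik} = δ_{ik} - ξᵢ ξ_k / (1 + w*)`. -/
def gammaS (n : ℕ) (ξ : Fin n → ℝ) : Matrix (Fin n) (Fin n) ℝ :=
  Matrix.of fun i k => (if i = k then (1 : ℝ) else 0) - ξ i * ξ k / (1 + wS n ξ)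

/-- The dual curvature matrix `A*[u*] = w* γ* (D²u*) γ*`. -/
def dualCurvM (n : ℕ) (ustar : (Fin n → ℝ) → ℝ) (ξ : Fin n → ℝ) :
    Matrix (Fin n) (Fin n) ℝ :=
  wS n ξ • (gammaS n ξ * hess n ustar ξ * gammaS n ξ)

/-- Open Euclidean ball of radius `r` about the origin. -/
def ballE (n : ℕ) (r : ℝ) : Set (Fin n → ℝ) := {ξ | ∑ i, (ξ i) ^ 2 < r ^ 2}

/-- Closed Euclidean ball of radius `r` about the origin. -/
def cballE (n : ℕ) (r : ℝ) : Set (Fin n → ℝ) := {ξ | ∑ i, (ξ i) ^ 2 ≤ r ^ 2}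

/-- Euclidean sphere of radius `r` about the origin. -/
def sphereE (n : ℕ) (r : ℝ) : Set (Fin n → ℝ) := {ξ | ∑ i, (ξ i) ^ 2 = r ^ 2}

/-- The full structural conditions on the curvature function `f_*`. -/
def FullStructural (n : ℕ) (fstar : (Fin n → ℝ) → ℝ) : Prop :=
  ContDiffOn ℝ (⊤ : ℕ∞) fstar (GammaPlus n) ∧
  ConcaveOn ℝ (GammaPlus n) fstar ∧
  (∀ κ ∈ GammaPlus n, 0 < fstar κ) ∧
  (∀ κ ∈ frontier (GammaPlus n), fstar κ = 0) ∧
  (∀ κ ∈ GammaPlus n, ∀ i, 0 < fderiv ℝ fstar κ (Pi.single i 1)) ∧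
  (∀ c : ℝ, 0 < c → ∀ κ ∈ GammaPlus n, fstar (c • κ) = c * fstar κ) ∧
  (∃ ε₀ > (0 : ℝ), ∀ κ ∈ GammaPlus n,
    ε₀ * fstar κ * (∑ i, κ i) ≤ ∑ i, fderiv ℝ fstar κ (Pi.single i 1) * (κ i) ^ 2) ∧
  (∀ C > (0 : ℝ), ∀ E : Set (Fin n → ℝ), IsCompact E → E ⊆ GammaPlus n →
    ∀ i₀ : Fin n, ∃ R > (0 : ℝ), ∀ κ ∈ E, C < fstar (Function.update κ i₀ (κ i₀ + R))) ∧
  fstar (fun _ => 1) = 1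

/-- Conditions A on the initial hypersurface. -/
def ConditionsA (n : ℕ) (u₀ : (Fin n → ℝ) → ℝ) (C₀ C₁ : ℝ) : Prop :=
  ContDiff ℝ (⊤ : ℕ∞) u₀ ∧
  (∀ x, gradSq n u₀ x < 1) ∧
  (∀ x, (hess n u₀ x).PosDef) ∧
  (∀ k : ℕ, ∀ i j : Fin n, ∃ M : ℝ, ∀ x,
      ‖iteratedFDeriv ℝ k (fun y => curvM n u₀ y i j) x‖ ≤ M) ∧
  (∀ x, Real.sqrt ((∑ i, (x i) ^ 2) + C₀) < u₀ x ∧ u₀ x < Real.sqrt ((∑ i, (x i) ^ 2) + C₁))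

/-!
The function `-c * w*` is the Legendre transform of the hyperboloid `√(|x|² + c²)`, all of whose
curvature radii equal `c`. Concretely, with `P = ξ ⊗ ξ` and `P² = (1 - w*²) P`,
`D²w* = -w*⁻¹ (1 + w*⁻² P)`, while `γ* = 1 - (1 + w*)⁻¹ P` is the inverse square root of
`1 + w*⁻² P`, whence `A*[-c * w*] = c * I` and `F_* = c`. On `v = -c(t) w*` the supersolution
inequality therefore becomes the scalar inequality `c' < c ^ (-α)`. The radius
`c(t) = a₀ [(1 + α) t̃] ^ (1 / (1 + α))` solves `c' = a₀ ^ (1 + α) * c ^ (-α)`, and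
`a₀ ^ (1 + α) < 1`.
-/

theorem one_add_smul_mul_one_add_smul {R A : Type*} [CommSemiring R] [Semiring A] [Algebra R A]
    {P : A} {s : R} (hP : P * P = s • P) (a b : R) :
    (1 + a • P) * (1 + b • P) = 1 + (a + b + a * b * s) • P := by
  simp only [mul_add, add_mul, one_mul, mul_one, smul_mul_smul_comm, hP]
  module

theorem vecMulVec_self_mul_self {ι R : Type*} [Fintype ι] [CommSemiring R] (x : ι → R) :
    Matrix.vecMulVec x x * Matrix.vecMulVec x x = (x ⬝ᵥ x) • Matrix.vecMulVec x x := by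
  rw [Matrix.vecMulVec_mul_vecMulVec, Matrix.vecMulVec_smul]

theorem eigenvalues_smul_one {ι : Type*} [Fintype ι] [DecidableEq ι] {c : ℝ}
    (h : (c • (1 : Matrix ι ι ℝ)).IsHermitian) : h.eigenvalues = fun _ => c := by
  funext i
  have : Nonempty ι := ⟨i⟩
  have hspec : spectrum ℝ (c • (1 : Matrix ι ι ℝ)) = {c} := by
    rw [← Algebra.algebraMap_eq_smul_one, spectrum.scalar_eq]
  have hmem := h.eigenvalues_mem_spectrum_real i
  rwa [hspec] at hmem

section DualCurvature

variable {n : ℕ}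

theorem FsM_smul_one (fstar : (Fin n → ℝ) → ℝ) (c : ℝ) :
    FsM n fstar (c • 1) = fstar fun _ => c := by
  have h : (c • (1 : Matrix (Fin n) (Fin n) ℝ)).IsHermitian :=
    Matrix.isHermitian_one.smul (IsSelfAdjoint.all c)
  rw [FsM, dif_pos h, eigenvalues_smul_one h]

theorem pd_const_mul (c : ℝ) (u : (Fin n → ℝ) → ℝ) (i : Fin n) :
    pd n (fun η => c * u η) i = fun η => c * pd n u i η := by
  funext ξ
  change fderiv ℝ (c • u) ξ _ = _
  rw [fderiv_const_smul_field]
  rfl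

theorem hess_const_mul (c : ℝ) (u : (Fin n → ℝ) → ℝ) (ξ : Fin n → ℝ) :
    hess n (fun η => c * u η) ξ = c • hess n u ξ := by
  ext i j
  simp only [hess, Matrix.of_apply, Matrix.smul_apply, smul_eq_mul, pd_const_mul]

theorem dualCurvM_const_mul (c : ℝ) (u : (Fin n → ℝ) → ℝ) (ξ : Fin n → ℝ) :
    dualCurvM n (fun η => c * u η) ξ = c • dualCurvM n u ξ := by
  rw [dualCurvM, hess_const_mul, mul_smul_comm, smul_mul_assoc, smul_comm, dualCurvM]

theorem isOpen_ballE (r : ℝ) : IsOpen (ballE n r) :=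
  isOpen_lt (by fun_prop) continuous_const

theorem hasFDerivAt_one_sub_sum_sq (ξ : Fin n → ℝ) :
    HasFDerivAt (fun η : Fin n → ℝ => 1 - ∑ i, η i ^ 2)
      ((-2 : ℝ) • ∑ i, ξ i • ContinuousLinearMap.proj (R := ℝ) (φ := fun _ : Fin n => ℝ) i) ξ := by
  have hsum := HasFDerivAt.fun_sum (u := Finset.univ) fun i _ =>
    (hasFDerivAt_apply (𝕜 := ℝ) i ξ).pow 2
  refine (hsum.const_sub 1).congr_fderiv ?_
  ext η
  simp [Finset.mul_sum, mul_assoc]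

theorem sum_smul_proj_single (ξ : Fin n → ℝ) (i : Fin n) :
    (∑ k, ξ k • ContinuousLinearMap.proj (R := ℝ) (φ := fun _ : Fin n => ℝ) k) (Pi.single i 1)
      = ξ i := by
  simp [Pi.single_apply]

theorem gammaS_eq (ξ : Fin n → ℝ) :
    gammaS n ξ = 1 + (-(1 + wS n ξ)⁻¹) • Matrix.vecMulVec ξ ξ := by
  ext i j
  simp only [gammaS, Matrix.of_apply, Matrix.add_apply, Matrix.one_apply, Matrix.smul_apply,
    Matrix.vecMulVec_apply, smul_eq_mul]
  ring

variable {ξ : Fin n → ℝ}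

theorem one_sub_sum_sq_pos (hξ : ξ ∈ ballE n 1) : 0 < 1 - ∑ i, ξ i ^ 2 :=
  sub_pos.2 (lt_of_lt_of_eq hξ (one_pow 2))

theorem wS_pos (hξ : ξ ∈ ballE n 1) : 0 < wS n ξ :=
  Real.sqrt_pos.2 (one_sub_sum_sq_pos hξ)

theorem dotProduct_self_eq_one_sub_wS_sq (hξ : ξ ∈ ballE n 1) : ξ ⬝ᵥ ξ = 1 - wS n ξ ^ 2 := by
  rw [wS, Real.sq_sqrt (one_sub_sum_sq_pos hξ).le, sub_sub_cancel]
  simp only [dotProduct, sq]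

theorem hasFDerivAt_wS (hξ : ξ ∈ ballE n 1) :
    HasFDerivAt (wS n)
      (-(wS n ξ)⁻¹ • ∑ i, ξ i • ContinuousLinearMap.proj (R := ℝ) (φ := fun _ : Fin n => ℝ) i)
      ξ := by
  have hsqrt := (hasFDerivAt_one_sub_sum_sq ξ).sqrt (one_sub_sum_sq_pos hξ).ne'
  have hcoeff : 1 / (2 * wS n ξ) * -2 = -(wS n ξ)⁻¹ := by
    field_simp
  rw [smul_smul] at hsqrt
  exact hcoeff ▸ hsqrt

theorem pd_wS (hξ : ξ ∈ ballE n 1) (i : Fin n) : pd n (wS n) i ξ = -(wS n ξ)⁻¹ * ξ i := by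
  rw [pd, (hasFDerivAt_wS hξ).fderiv, smul_apply, sum_smul_proj_single, smul_eq_mul]

theorem hess_wS (hξ : ξ ∈ ballE n 1) :
    hess n (wS n) ξ = (-(wS n ξ)⁻¹) • (1 + (wS n ξ ^ 2)⁻¹ • Matrix.vecMulVec ξ ξ) := by
  have hw := (wS_pos hξ).ne'
  ext i j
  have hpd : pd n (wS n) j =ᶠ[nhds ξ] fun η => -((wS n η)⁻¹ * η j) := by
    filter_upwards [(isOpen_ballE 1).mem_nhds hξ] with η hη
    rw [pd_wS hη, neg_mul]
  have hinv := (hasDerivAt_inv hw).comp_hasFDerivAt ξ (hasFDerivAt_wS hξ)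
  have hderiv := (hinv.mul (hasFDerivAt_apply (𝕜 := ℝ) j ξ)).neg
  have hfderiv := hpd.fderiv_eq.trans hderiv.fderiv
  rw [hess, Matrix.of_apply, pd, hfderiv]
  simp only [neg_apply, add_apply, smul_apply, sum_smul_proj_single,
    ContinuousLinearMap.proj_apply, Function.comp_apply, Matrix.smul_apply, Matrix.add_apply,
    Matrix.one_eq_pi_single, Matrix.vecMulVec_apply, smul_eq_mul]
  field_simp

theorem gammaS_mul_mul_gammaS (hξ : ξ ∈ ballE n 1) :
    gammaS n ξ * (1 + (wS n ξ ^ 2)⁻¹ • Matrix.vecMulVec ξ ξ) * gammaS n ξ = 1 := by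
  have hw := wS_pos hξ
  have hP := vecMulVec_self_mul_self ξ
  rw [dotProduct_self_eq_one_sub_wS_sq hξ] at hP
  rw [gammaS_eq, one_add_smul_mul_one_add_smul hP, one_add_smul_mul_one_add_smul hP]
  refine add_eq_left.2 (smul_eq_zero_of_left ?_ _)
  field_simp
  ring

theorem dualCurvM_wS (hξ : ξ ∈ ballE n 1) : dualCurvM n (wS n) ξ = -1 := by
  rw [dualCurvM, hess_wS hξ, mul_smul_comm, smul_mul_assoc, gammaS_mul_mul_gammaS hξ, smul_smul,
    mul_neg, mul_inv_cancel₀ (wS_pos hξ).ne', neg_one_smul]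

theorem dualCurvM_neg_mul_wS (hξ : ξ ∈ ballE n 1) (c : ℝ) :
    dualCurvM n (fun η => -c * wS n η) ξ = c • 1 := by
  rw [dualCurvM_const_mul, dualCurvM_wS hξ, smul_neg, neg_smul, neg_neg]

theorem dualFlow_lt_deriv_of_lt_rpow {α : ℝ} {fstar : (Fin n → ℝ) → ℝ} {c : ℝ → ℝ} {c' t : ℝ}
    (hξ : ξ ∈ ballE n 1) (hdiag : fstar (fun _ => c t) = c t) (hc : HasDerivAt c c' t)
    (hlt : c' < c t ^ (-α)) :
    -(FsM n fstar (dualCurvM n (fun η => -c t * wS n η) ξ)) ^ (-α) * wS n ξ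
      < deriv (fun s => -c s * wS n ξ) t := by
  rw [dualCurvM_neg_mul_wS hξ, FsM_smul_one, hdiag, (hc.fun_neg.mul_const _).deriv]
  exact mul_lt_mul_of_pos_right (neg_lt_neg hlt) (wS_pos hξ)

end DualCurvature

section BarrierRadius

/-- The radius `a₀ [(1 + α) t̃] ^ (1 / (1 + α))`, with `t̃ = t + (1 + α)⁻¹`, of the expanding
hyperboloid whose Legendre transform is the barrier `v`. -/
def barrierRadius (α a₀ t : ℝ) : ℝ :=
  a₀ * ((1 + α) * (t + (1 + α)⁻¹)) ^ ((1 : ℝ) / (1 + α))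

variable {α a₀ t : ℝ}

theorem barrierRadius_pos (ha₀ : 0 < a₀) (ht : 0 < (1 + α) * (t + (1 + α)⁻¹)) :
    0 < barrierRadius α a₀ t :=
  mul_pos ha₀ (Real.rpow_pos_of_pos ht _)

theorem hasDerivAt_barrierRadius (ha₀ : 0 < a₀) (ht : 0 < (1 + α) * (t + (1 + α)⁻¹)) :
    HasDerivAt (barrierRadius α a₀) (a₀ ^ (1 + α) * barrierRadius α a₀ t ^ (-α)) t := by
  have hα : 1 + α ≠ 0 := left_ne_zero_of_mul ht.ne'
  have hbase : HasDerivAt (fun s : ℝ => (1 + α) * (s + (1 + α)⁻¹)) (1 + α) t := by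
    simpa using ((hasDerivAt_id t).add_const (1 + α)⁻¹).const_mul (1 + α)
  refine ((hbase.rpow_const (Or.inl ht.ne')).const_mul a₀).congr_deriv ?_
  have hexp : 1 / (1 + α) * -α = 1 / (1 + α) - 1 := by
    field_simp
    ring
  rw [barrierRadius, Real.mul_rpow ha₀.le (Real.rpow_nonneg ht.le _), ← Real.rpow_mul ht.le, hexp,
    ← mul_assoc (a₀ ^ (1 + α)), ← Real.rpow_add ha₀, add_neg_cancel_right, Real.rpow_one,
    mul_one_div_cancel hα, one_mul]

theorem rpow_mul_barrierRadius_rpow_lt (hα : -1 < α) (ha₀ : 0 < a₀) (ha₀' : a₀ < 1)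
    (ht : 0 < (1 + α) * (t + (1 + α)⁻¹)) :
    a₀ ^ (1 + α) * barrierRadius α a₀ t ^ (-α) < barrierRadius α a₀ t ^ (-α) :=
  mul_lt_of_lt_one_left (Real.rpow_pos_of_pos (barrierRadius_pos ha₀ ht) _)
    (Real.rpow_lt_one ha₀.le ha₀' (neg_lt_iff_pos_add'.1 hα))

end BarrierRadius

theorem statement9_general (n : ℕ) (α : ℝ) (hα : -1 < α)
    (a₀ : ℝ) (ha₀ : 0 < a₀) (ha₀' : a₀ < 1)
    (fstar : (Fin n → ℝ) → ℝ)
    (hdiag : ∀ c : ℝ, 0 < c → fstar (fun _ => c) = c)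
    (v : (Fin n → ℝ) → ℝ → ℝ)
    (hv : v = fun ξ t =>
      -a₀ * (((1 + α) * (t + (1 + α)⁻¹)) ^ ((1 : ℝ) / (1 + α))) *
        Real.sqrt (1 - ∑ i, (ξ i) ^ 2)) :
    ∀ ξ ∈ ballE n 1, ∀ t : ℝ, -(1 + α)⁻¹ < t →
      -(FsM n fstar (dualCurvM n (fun η => v η t) ξ)) ^ (-α) * wS n ξ
        < deriv (fun s => v ξ s) t := by
  intro ξ hξ t ht
  have hbase : 0 < (1 + α) * (t + (1 + α)⁻¹) :=
    mul_pos (neg_lt_iff_pos_add'.1 hα) (neg_lt_iff_pos_add.1 ht)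
  have hv_eq : v = fun η s => -barrierRadius α a₀ s * wS n η := by
    simp only [hv, barrierRadius, wS, neg_mul]
  rw [hv_eq]
  exact dualFlow_lt_deriv_of_lt_rpow hξ (hdiag _ (barrierRadius_pos ha₀ hbase))
    (hasDerivAt_barrierRadius ha₀ hbase) (rpow_mul_barrierRadius_rpow_lt hα ha₀ ha₀' hbase)

/-- With `t̃ = t + (1+α)⁻¹` and `0 < a₀ < 1`, the function
`v(ξ,t) = −a₀[(1+α)t̃]^{1/(1+α)}√(1−|ξ|²)` is a strict supersolution of the dual flow:
`∂ₜv > −F_*(A*[v])^{−α} w*` on `B₁ × (0,∞)`. -/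
theorem statement9 (n : ℕ) (hn : 1 ≤ n) (α : ℝ) (hα : 0 < α)
    (a₀ : ℝ) (ha₀ : 0 < a₀) (ha₀' : a₀ < 1)
    (fstar : (Fin n → ℝ) → ℝ)
    (hpos : ∀ κ ∈ GammaPlus n, 0 < fstar κ)
    (hhom : ∀ c : ℝ, 0 < c → ∀ κ ∈ GammaPlus n, fstar (c • κ) = c * fstar κ)
    (hnorm : fstar (fun _ => 1) = 1)
    (v : (Fin n → ℝ) → ℝ → ℝ)
    (hv : v = fun ξ t =>
      -a₀ * (((1 + α) * (t + (1 + α)⁻¹)) ^ ((1 : ℝ) / (1 + α))) *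
        Real.sqrt (1 - ∑ i, (ξ i) ^ 2)) :
    ∀ ξ ∈ ballE n 1, ∀ t : ℝ, 0 < t →
      -(FsM n fstar (dualCurvM n (fun η => v η t) ξ)) ^ (-α) * wS n ξ
        < deriv (fun s => v ξ s) t := by
  intro ξ hξ t ht
  refine statement9_general n α (by linarith) a₀ ha₀ ha₀' fstar (fun c hc => ?_) v hv ξ hξ t
    ((neg_neg_of_pos (by positivity)).trans ht)
  simpa [Pi.smul_def, hnorm] using hhom c hc (fun _ => 1) fun _ => one_pos

end
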